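/- Let k be a field and for m ≥ 1 consider the k-algebra H_{1,m} = k[s,y₁,...,y_m]/(C₁,...,C_{m+1}) where the C_i are the coefficients of x^{m+1-i} in (x - s)(x^m + y₁x^{m-1} + ... + y_m). Then H_{1,m} is isomorphic as a k-algebra to k[u]/(u^{m+1}). -/

import Mathlib

/-!
The relations `yᵢ = s * yᵢ₋₁` and `y₀ = 1` force `yᵢ = s ^ i`, and the last relation `s * y_m = 0`
then says `s ^ (m + 1) = 0`. Hence `H_{1,m}` and `k[u] ⧸ (u ^ (m + 1))` have the same universal
property: a homomorphism out of either is an element whose `(m + 1)`-st power vanishes.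
-/

open MvPolynomial

/-- `Yv k m i` is the variable `yᵢ` (for `1 ≤ i ≤ m`), with the convention `y₀ = 1`,
in the polynomial ring `k[s, y₁, …, y_m]` where `s` is the variable of index `0`. -/
noncomputable def Yv (k : Type*) [Field k] (m : ℕ) (i : ℕ) : MvPolynomial (Fin (m + 1)) k :=
  if i = 0 then 1 else if h : i ≤ m then X ⟨i, Nat.lt_succ_of_le h⟩ else 0

theorem forall_eq_mul_pred_iff_forall_eq_pow {M : Type*} [Monoid M] {s : M} {y : ℕ → M}
    (hy : y 0 = 1) (m : ℕ) :
    (∀ i, 1 ≤ i → i ≤ m → y i = s * y (i - 1)) ↔ ∀ i ≤ m, y i = s ^ i := by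
  constructor
  · intro h i hi
    induction i with
    | zero => rw [hy, pow_zero]
    | succ i ih => rw [h (i + 1) i.succ_pos hi, Nat.add_sub_cancel, ih (by lia), pow_succ']
  · intro h i hi him
    rw [h i him, h (i - 1) (by lia), mul_pow_sub_one (by lia)]

/-- The coefficient `yᵢ` of `x ^ (m - i)` in the generic monic polynomial of degree `m`, as an
element of `R[s, y₁, …, y_m]`. This is `Yv` over an arbitrary commutative ring: `s` has index `0`,
`y₀ = 1`, and `yᵢ = 0` for `i > m`. -/
noncomputable def monicCoeff (R : Type*) [CommRing R] (m i : ℕ) : MvPolynomial (Fin (m + 1)) R :=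
  if i = 0 then 1 else if h : i ≤ m then X ⟨i, Nat.lt_succ_of_le h⟩ else 0

/-- The ideal `(C₁, …, C_{m+1})` of `R[s, y₁, …, y_m]` expressing that
`(x - s) * (x ^ m + y₁ * x ^ (m - 1) + ⋯ + y_m) = x ^ (m + 1)`. -/
noncomputable def hilbertIdeal (R : Type*) [CommRing R] (m : ℕ) :
    Ideal (MvPolynomial (Fin (m + 1)) R) :=
  Ideal.span {p | (∃ i, 1 ≤ i ∧ i ≤ m ∧ p = monicCoeff R m i - X 0 * monicCoeff R m (i - 1)) ∨
    p = -(X 0 * monicCoeff R m m)}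

/-- The algebra `H_{1,m}` over `R`, which represents the Hilbert functor of one point on
`Spec (R[x] ⧸ (x ^ (m + 1)))`. -/
abbrev HilbertAlgebra (R : Type*) [CommRing R] (m : ℕ) : Type _ :=
  MvPolynomial (Fin (m + 1)) R ⧸ hilbertIdeal R m

section Relations

variable {R : Type*} [CommRing R] {m : ℕ}

theorem monicCoeff_zero : monicCoeff R m 0 = 1 :=
  if_pos rfl

theorem monicCoeff_val_of_ne_zero {j : Fin (m + 1)} (hj : j ≠ 0) :
    monicCoeff R m (j : ℕ) = X j := by
  rw [monicCoeff, if_neg (Fin.val_ne_zero_iff.mpr hj), dif_pos j.is_le]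

theorem hilbertIdeal_le_ker_iff {A : Type*} [Ring A] (f : MvPolynomial (Fin (m + 1)) R →+* A) :
    hilbertIdeal R m ≤ RingHom.ker f ↔
      (∀ i ≤ m, f (monicCoeff R m i) = f (X 0) ^ i) ∧ f (X 0) ^ (m + 1) = 0 := by
  have relations_iff : hilbertIdeal R m ≤ RingHom.ker f ↔
      (∀ i, 1 ≤ i → i ≤ m → f (monicCoeff R m i) = f (X 0) * f (monicCoeff R m (i - 1))) ∧
        f (X 0) * f (monicCoeff R m m) = 0 := by
    rw [hilbertIdeal, Ideal.span_le]
    constructor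
    · refine fun h ↦ ⟨fun i hi him ↦ ?_, ?_⟩
      · simpa [RingHom.mem_ker, sub_eq_zero] using h (Or.inl ⟨i, hi, him, rfl⟩)
      · simpa [RingHom.mem_ker] using h (Or.inr rfl)
    · rintro ⟨hrec, hlast⟩ p (⟨i, hi, him, rfl⟩ | rfl)
      · simp [RingHom.mem_ker, hrec i hi him]
      · simp [RingHom.mem_ker, hlast]
  have map_zero_coeff : f (monicCoeff R m 0) = 1 := by rw [monicCoeff_zero, map_one]
  rw [relations_iff,
    forall_eq_mul_pred_iff_forall_eq_pow (y := fun i ↦ f (monicCoeff R m i)) map_zero_coeff]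
  refine and_congr_right fun h ↦ ?_
  rw [h m le_rfl, pow_succ']

end Relations

section PowEval

variable {R A : Type*} [CommRing R] [CommRing A] [Algebra R A] {m : ℕ}

/-- The evaluation `s ↦ a`, `yᵢ ↦ a ^ i` of `R[s, y₁, …, y_m]`. It is the only evaluation with
`s ↦ a` that can kill `hilbertIdeal R m`. -/
noncomputable def powEval (m : ℕ) (a : A) : MvPolynomial (Fin (m + 1)) R →ₐ[R] A :=
  aeval fun j ↦ if j = 0 then a else a ^ (j : ℕ)

theorem powEval_X_zero (a : A) : powEval (R := R) m a (X 0) = a := by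
  rw [powEval, aeval_X, if_pos rfl]

theorem powEval_monicCoeff (a : A) {i : ℕ} (hi : i ≤ m) :
    powEval m a (monicCoeff R m i) = a ^ i := by
  lift i to Fin (m + 1) using Nat.lt_succ_of_le hi
  by_cases h : i = 0
  · rw [h, Fin.val_zero, monicCoeff_zero, map_one, pow_zero]
  · rw [monicCoeff_val_of_ne_zero h, powEval, aeval_X, if_neg h]

theorem hilbertIdeal_le_ker_powEval {a : A} (ha : a ^ (m + 1) = 0) :
    hilbertIdeal R m ≤ RingHom.ker (powEval (R := R) m a).toRingHom := by
  refine (hilbertIdeal_le_ker_iff _).mpr ⟨fun i hi ↦ ?_, ?_⟩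
  · exact (powEval_monicCoeff a hi).trans (congrArg (· ^ i) (powEval_X_zero a).symm)
  · exact (congrArg (· ^ (m + 1)) (powEval_X_zero a)).trans ha

end PowEval

namespace HilbertAlgebra

variable {R : Type*} [CommRing R] {m : ℕ}

/-- The class of `s` in `H_{1,m}`: the universal element whose `(m + 1)`-st power vanishes. -/
noncomputable def root (R : Type*) [CommRing R] (m : ℕ) : HilbertAlgebra R m :=
  Ideal.Quotient.mk _ (X 0)

theorem mk_monicCoeff {i : ℕ} (hi : i ≤ m) :
    Ideal.Quotient.mk (hilbertIdeal R m) (monicCoeff R m i) = root R m ^ i :=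
  ((hilbertIdeal_le_ker_iff _).mp Ideal.mk_ker.ge).1 i hi

theorem root_pow_succ : root R m ^ (m + 1) = 0 :=
  ((hilbertIdeal_le_ker_iff _).mp Ideal.mk_ker.ge).2

section Lift

variable {A : Type*} [CommRing A] [Algebra R A]

/-- The homomorphism out of `H_{1,m}` classified by an element whose `(m + 1)`-st power
vanishes. -/
noncomputable def lift (a : A) (ha : a ^ (m + 1) = 0) : HilbertAlgebra R m →ₐ[R] A :=
  Ideal.Quotient.liftₐ _ (powEval m a) fun _ hp ↦ hilbertIdeal_le_ker_powEval ha hp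

theorem lift_root (a : A) (ha : a ^ (m + 1) = 0) : lift a ha (root R m) = a :=
  powEval_X_zero a

end Lift

theorem algHom_ext {A : Type*} [Semiring A] [Algebra R A]
    {f g : HilbertAlgebra R m →ₐ[R] A} (h : f (root R m) = g (root R m)) : f = g := by
  refine Ideal.Quotient.algHom_ext _ (MvPolynomial.algHom_ext fun j ↦ ?_)
  change f (Ideal.Quotient.mk _ (X j)) = g (Ideal.Quotient.mk _ (X j))
  by_cases hj : j = 0
  · rw [hj]
    exact h
  · rw [← monicCoeff_val_of_ne_zero hj, mk_monicCoeff j.is_le, map_pow, map_pow, h]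

/-- The isomorphism between `H_{1,m}` and `R[u] ⧸ (u ^ (m + 1))` matching `s` with `u`. -/
noncomputable def equivAdjoinRoot (R : Type*) [CommRing R] (m : ℕ) :
    HilbertAlgebra R m ≃ₐ[R] AdjoinRoot (Polynomial.X ^ (m + 1) : Polynomial R) :=
  have root_pow : AdjoinRoot.root (Polynomial.X ^ (m + 1) : Polynomial R) ^ (m + 1) = 0 := by
    rw [← AdjoinRoot.mk_X, ← map_pow, AdjoinRoot.mk_self]
  AlgEquiv.ofAlgHom (lift (AdjoinRoot.root _) root_pow)
    (AdjoinRoot.liftAlgHom _ (Algebra.ofId R _) (root R m) (by simp [root_pow_succ]))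
    (AdjoinRoot.algHom_ext (by simp [lift_root]))
    (algHom_ext (by simp [lift_root]))

end HilbertAlgebra

theorem stmt12_general (R : Type*) [CommRing R] (m : ℕ) :
    Nonempty (HilbertAlgebra R m ≃ₐ[R]
      (Polynomial R ⧸ Ideal.span {(Polynomial.X : Polynomial R) ^ (m + 1)})) :=
  ⟨HilbertAlgebra.equivAdjoinRoot R m⟩

theorem stmt12 (k : Type*) [Field k] (m : ℕ) (hm : 1 ≤ m) :
    Nonempty ((MvPolynomial (Fin (m + 1)) k ⧸
        Ideal.span {p : MvPolynomial (Fin (m + 1)) k |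
          (∃ i, 1 ≤ i ∧ i ≤ m ∧ p = Yv k m i - X 0 * Yv k m (i - 1)) ∨
          p = -(X 0 * Yv k m m)}) ≃ₐ[k]
      (Polynomial k ⧸ Ideal.span {(Polynomial.X : Polynomial k) ^ (m + 1)})) :=
  stmt12_general k m
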